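/- arXiv:2504.01727 — 2 statements merged into one kernel-verified Lean document; each statement's English description precedes it below -/
import Mathlib

section
/- Let U ⊆ ℝ³ be open, let X : U → ℝ³ be twice continuously differentiable with covariant basis vectors aᵢ(ξ) = ∂X/∂ξⁱ(ξ) and Jacobian determinant J(ξ) = a₁ ⬝ (a₂ × a₃) ≠ 0 on U, and let M(ξ) be the 3×3 matrix with columns a₂ × a₃, a₃ × a₁, a₁ × a₂. Then for every continuously differentiable vector field f : ℝ³ → ℝ³ and every ξ ∈ U, the divergence transforms as J(ξ) · (∇ ⬝ f)(X(ξ)) = ∇_ξ ⬝ (M(ξ)ᵀ · (f ∘ X))(ξ), where ∇_ξ ⬝ g = ∑ᵢ ∂gᵢ/∂ξⁱ. -/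
/-!
The right-hand side is `∑ᵢ ∂ᵢ ((aⱼ × aₖ) ⬝ (f ∘ X))` with `(i, j, k)` cyclic. By the product rule it
splits into two parts. The terms that differentiate a basis vector cancel: these are the metric
identities `∑ᵢ ∂ᵢ (aⱼ × aₖ) = 0`, which follow from the symmetry `∂ᵢ aⱼ = ∂ⱼ aᵢ` of the second
derivative of `X` and the antisymmetry of the cross product. In the remaining terms the chain rule
gives `∂ᵢ (f ∘ X) = Df (aᵢ)`, and `∑ᵢ (aⱼ × aₖ) ⬝ Df (aᵢ) = J · tr Df`, a polynomial identity in the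
entries of the `aᵢ` and `Df`. The product rule is `fderiv_cross_dot`.
-/

open Matrix

/-- Product rule for the scalar triple product. -/
lemma fderiv_cross_dot {E : Type*} [NormedAddCommGroup E] [NormedSpace ℝ E]
    {u v w : E → Fin 3 → ℝ} {u' v' w' : E →L[ℝ] (Fin 3 → ℝ)} {x : E}
    (hu : HasFDerivAt u u' x) (hv : HasFDerivAt v v' x) (hw : HasFDerivAt w w' x) (d : E) :
    fderiv ℝ (fun y => crossProduct (u y) (v y) ⬝ᵥ w y) x d
      = crossProduct (u' d) (v x) ⬝ᵥ w x + crossProduct (u x) (v' d) ⬝ᵥ w x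
        + crossProduct (u x) (v x) ⬝ᵥ w' d := by
  have hu i := hasFDerivAt_pi'.1 hu i
  have hv i := hasFDerivAt_pi'.1 hv i
  have hw i := hasFDerivAt_pi'.1 hw i
  have key := (((((hu 1).mul (hv 2)).sub ((hu 2).mul (hv 1))).mul (hw 0)).add
    ((((hu 2).mul (hv 0)).sub ((hu 0).mul (hv 2))).mul (hw 1))).add
    ((((hu 0).mul (hv 1)).sub ((hu 1).mul (hv 0))).mul (hw 2))
  have e : (fun y => crossProduct (u y) (v y) ⬝ᵥ w y) = fun y =>
      (u y 1 * v y 2 - u y 2 * v y 1) * w y 0 + (u y 2 * v y 0 - u y 0 * v y 2) * w y 1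
        + (u y 0 * v y 1 - u y 1 * v y 0) * w y 2 := by
    funext y
    simp [cross_apply, dotProduct, Fin.sum_univ_three]
  rw [e]
  refine (congrArg (fun L : E →L[ℝ] ℝ => L d) key.fderiv).trans ?_
  simp [cross_apply, dotProduct, Fin.sum_univ_three]
  ring

/-- Divergence transformation under a curvilinear mapping:
`J(ξ) · (∇ ⬝ f)(X(ξ)) = ∇_ξ ⬝ (M(ξ)ᵀ (f ∘ X))(ξ)` for `ξ ∈ U`, where `M` has columns
`a₂ × a₃`, `a₃ × a₁`, `a₁ × a₂` and `J = a₁ ⬝ (a₂ × a₃) ≠ 0` on the open set `U`,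
and `X` is twice continuously differentiable on `U`. -/
theorem divergence_transform
    (U : Set (Fin 3 → ℝ)) (hU : IsOpen U)
    (X : (Fin 3 → ℝ) → (Fin 3 → ℝ)) (hX : ContDiffOn ℝ 2 X U)
    (a : Fin 3 → (Fin 3 → ℝ) → (Fin 3 → ℝ))
    (ha : ∀ i ξ, a i ξ = fderiv ℝ X ξ (Pi.single i 1))
    (J : (Fin 3 → ℝ) → ℝ)
    (hJ : ∀ ξ, J ξ = a 0 ξ ⬝ᵥ crossProduct (a 1 ξ) (a 2 ξ))
    (hJ0 : ∀ ξ ∈ U, J ξ ≠ 0)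
    (M : (Fin 3 → ℝ) → Matrix (Fin 3) (Fin 3) ℝ)
    (hM : ∀ ξ, M ξ = Matrix.of fun i j =>
      ![crossProduct (a 1 ξ) (a 2 ξ), crossProduct (a 2 ξ) (a 0 ξ),
        crossProduct (a 0 ξ) (a 1 ξ)] j i)
    (f : (Fin 3 → ℝ) → (Fin 3 → ℝ)) (hf : ContDiff ℝ 1 f)
    (ξ : Fin 3 → ℝ) (hξ : ξ ∈ U) :
    J ξ * (∑ i, fderiv ℝ (fun y => f y i) (X ξ) (Pi.single i 1))
      = ∑ i, fderiv ℝ (fun η => (M η)ᵀ.mulVec (f (X η)) i) ξ (Pi.single i 1) := by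
  have hXξ : ContDiffAt ℝ 2 X ξ := hX.contDiffAt (hU.mem_nhds hξ)
  have hXd : HasFDerivAt X (fderiv ℝ X ξ) ξ := (hXξ.differentiableAt (by norm_num)).hasFDerivAt
  have hfd : HasFDerivAt f (fderiv ℝ f (X ξ)) (X ξ) :=
    (hf.differentiable (by norm_num) (X ξ)).hasFDerivAt
  have hfX : HasFDerivAt (fun η => f (X η)) ((fderiv ℝ f (X ξ)).comp (fderiv ℝ X ξ)) ξ :=
    hfd.comp ξ hXd
  have hD : HasFDerivAt (fderiv ℝ X) (fderiv ℝ (fderiv ℝ X) ξ) ξ :=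
    ((hXξ.fderiv_right (m := 1) (by norm_num)).differentiableAt (by norm_num)).hasFDerivAt
  have hsymm : IsSymmSndFDerivAt ℝ X ξ := hXξ.isSymmSndFDerivAt (by simp)
  have had (i : Fin 3) : HasFDerivAt (a i)
      ((fderiv ℝ (fderiv ℝ X) ξ).flip (Pi.single i 1)) ξ := by
    rw [show a i = fun η => fderiv ℝ X η (Pi.single i 1) from funext (ha i)]
    have h := hD.clm_apply (hasFDerivAt_const (Pi.single i (1 : ℝ)) ξ)
    rwa [ContinuousLinearMap.comp_zero, zero_add] at h
  have hfi (i : Fin 3) : fderiv ℝ (fun y => f y i) (X ξ) (Pi.single i 1)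
      = fderiv ℝ f (X ξ) (Pi.single i 1) i := by
    rw [(hasFDerivAt_pi'.1 hfd i).fderiv]; rfl
  -- `Df` applied to a vector, expanded in the standard basis.
  have hlin (v : Fin 3 → ℝ) : fderiv ℝ f (X ξ) v
      = ∑ m, v m • fderiv ℝ f (X ξ) (Pi.single m 1) := by
    conv_lhs => rw [pi_eq_sum_univ' v]
    simp only [map_sum, map_smul]
  have e0 : (fun η => (M η)ᵀ.mulVec (f (X η)) 0)
      = fun η => crossProduct (a 1 η) (a 2 η) ⬝ᵥ f (X η) := by
    funext η; rw [hM]; rfl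
  have e1 : (fun η => (M η)ᵀ.mulVec (f (X η)) 1)
      = fun η => crossProduct (a 2 η) (a 0 η) ⬝ᵥ f (X η) := by
    funext η; rw [hM]; rfl
  have e2 : (fun η => (M η)ᵀ.mulVec (f (X η)) 2)
      = fun η => crossProduct (a 0 η) (a 1 η) ⬝ᵥ f (X η) := by
    funext η; rw [hM]; rfl
  simp only [Fin.sum_univ_three, hfi]
  rw [e0, e1, e2, fderiv_cross_dot (had 1) (had 2) hfX, fderiv_cross_dot (had 2) (had 0) hfX,
    fderiv_cross_dot (had 0) (had 1) hfX, hJ]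
  simp only [ContinuousLinearMap.flip_apply, ContinuousLinearMap.comp_apply, ← ha]
  rw [hsymm.eq (Pi.single 1 1) (Pi.single 0 1), hsymm.eq (Pi.single 2 1) (Pi.single 0 1),
    hsymm.eq (Pi.single 2 1) (Pi.single 1 1), hlin (a 0 ξ), hlin (a 1 ξ), hlin (a 2 ξ)]
  simp [cross_apply, dotProduct, Fin.sum_univ_three]
  ring
end

section
/- Let u_{nL}, u_{nR} ∈ ℝ, c_{sL}, c_{sR} > 0, ρ_L, ρ_R > 0, set a_L = √(u_{nL}² + 4c_{sL}²), a_R = √(u_{nR}² + 4c_{sR}²), λ_L± = (u_{nL} ± a_L)/2, λ_R± = (u_{nR} ± a_R)/2, and let u* ∈ ℝ. Define ρ_L* = ρ_L λ_L⁺/(u* − λ_L⁻) and ρ_R* = ρ_R λ_R⁻/(u* − λ_R⁺). Then the upwind-selected star density ρ* (equal to ρ_L* if u* ≥ 0 and to ρ_R* if u* < 0) is strictly positive: if u* ≥ 0 then ρ_L* > 0, and if u* < 0 then ρ_R* > 0. -/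
/-! Since `c > 0`, `√(u² + 4c²) > |u|`, so the wave speeds satisfy `λ⁻ < 0 < λ⁺` on each side.
Hence for `u* ≥ 0` the numerator and denominator of `ρ_L*` are both positive, and for `u* < 0`
those of `ρ_R*` are both negative. -/

lemma abs_lt_sqrt_sq_add (u c : ℝ) (hc : 0 < c) : |u| < Real.sqrt (u ^ 2 + 4 * c ^ 2) := by
  apply Real.lt_sqrt_of_sq_lt
  rw [sq_abs]
  have : 0 < c ^ 2 := by positivity
  linarith

/-- Positivity of the upwind-selected star density of the exact Riemann
solver: with `ρ_L* = ρ_L λ_L⁺/(u* − λ_L⁻)` and `ρ_R* = ρ_R λ_R⁻/(u* − λ_R⁺)`, if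
`u* ≥ 0` then `ρ_L* > 0`, and if `u* < 0` then `ρ_R* > 0`. -/
theorem star_density_positive
    (unL unR csL csR ρL ρR : ℝ) (hcsL : 0 < csL) (hcsR : 0 < csR)
    (hρL : 0 < ρL) (hρR : 0 < ρR)
    (aL aR : ℝ)
    (haL : aL = Real.sqrt (unL ^ 2 + 4 * csL ^ 2))
    (haR : aR = Real.sqrt (unR ^ 2 + 4 * csR ^ 2))
    (lLp lLm lRp lRm : ℝ)
    (hlLp : lLp = (unL + aL) / 2) (hlLm : lLm = (unL - aL) / 2)
    (hlRp : lRp = (unR + aR) / 2) (hlRm : lRm = (unR - aR) / 2)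
    (us : ℝ)
    (ρLs ρRs : ℝ)
    (hρLs : ρLs = ρL * lLp / (us - lLm))
    (hρRs : ρRs = ρR * lRm / (us - lRp)) :
    (0 ≤ us → 0 < ρLs) ∧ (us < 0 → 0 < ρRs) := by
  have hL := abs_lt.mp (abs_lt_sqrt_sq_add unL csL hcsL)
  have hR := abs_lt.mp (abs_lt_sqrt_sq_add unR csR hcsR)
  rw [← haL] at hL
  rw [← haR] at hR
  constructor
  · intro hus
    rw [hρLs]
    exact div_pos (mul_pos hρL (by linarith)) (by linarith)
  · intro hus
    rw [hρRs]
    exact div_pos_of_neg_of_neg (mul_neg_of_pos_of_neg hρR (by linarith)) (by linarith)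
end
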